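/- arXiv:2604.01392 — 7 statements merged into one kernel-verified Lean document; each statement's English description precedes it below -/
import Mathlib

section
/- Let M be an n×n real symmetric matrix (n ≥ 1). Then M is positive definite if and only if all of its leading principal minors are positive, i.e., det(M_{(1:i,1:i)}) > 0 for every i ∈ {1,…,n}, where M_{(1:i,1:i)} denotes the submatrix of M formed by its first i rows and first i columns. -/
/-!
Split off the last row and column of a Hermitian matrix: `M = [A B; Bᴴ d]`. If `A` is positive
definite, block elimination shows that `M` is congruent to the block diagonal matrix with blocks
`A` and `d - Bᴴ A⁻¹ B`. The last block is a scalar, equal to `det M / det A`, so `M` is positive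
definite if and only if `A` is and `det M > 0`. Induction on the size then gives the criterion.
-/

open Matrix
open scoped ComplexOrder

section BlockMatrices

variable {m n R : Type*}

theorem posDef_fromBlocks_zero_iff [Finite m] [Finite n]
    [Ring R] [PartialOrder R] [StarRing R] [IsOrderedAddMonoid R]
    {A : Matrix m m R} {D : Matrix n n R} :
    (fromBlocks A 0 0 D).PosDef ↔ A.PosDef ∧ D.PosDef := by
  refine ⟨fun h ↦ ⟨h.submatrix Sum.inl_injective, h.submatrix Sum.inr_injective⟩, ?_⟩
  rintro ⟨hA, hD⟩
  have := Fintype.ofFinite m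
  have := Fintype.ofFinite n
  have isHermitian : (fromBlocks A 0 0 D).IsHermitian :=
    hA.isHermitian.fromBlocks conjTranspose_zero hD.isHermitian
  refine .of_dotProduct_mulVec_pos isHermitian fun x hx ↦ ?_
  obtain ⟨u, v, rfl⟩ : ∃ u v, x = Sum.elim u v := ⟨_, _, (Sum.elim_comp_inl_inr x).symm⟩
  have form_eq : star (Sum.elim u v) ⬝ᵥ fromBlocks A 0 0 D *ᵥ Sum.elim u v =
      star u ⬝ᵥ A *ᵥ u + star v ⬝ᵥ D *ᵥ v := by
    simp [fromBlocks_mulVec, Function.star_sumElim]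
  rw [form_eq]
  by_cases hu : u = 0
  · have hv : v ≠ 0 := by
      rintro rfl
      exact hx (by simp [hu])
    simpa [hu] using hD.dotProduct_mulVec_pos hv
  · exact add_pos_of_pos_of_nonneg (hA.dotProduct_mulVec_pos hu)
      (hD.posSemidef.dotProduct_mulVec_nonneg v)

theorem posDef_fromBlocks_iff_posDef_schurComplement [Fintype m] [DecidableEq m] [Finite n]
    [CommRing R] [PartialOrder R] [StarRing R] [IsOrderedAddMonoid R]
    {A : Matrix m m R} [Invertible A] (hA : A.PosDef) (B : Matrix m n R) (D : Matrix n n R) :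
    (fromBlocks A B Bᴴ D).PosDef ↔ (D - Bᴴ * ⅟A * B).PosDef := by
  classical
  have := Fintype.ofFinite n
  let U : Matrix (m ⊕ n) (m ⊕ n) R := fromBlocks 1 (⅟A * B) 0 1
  have isUnit_U : IsUnit U := by simp [U, isUnit_iff_isUnit_det]
  have star_U : star U = fromBlocks 1 0 (Bᴴ * ⅟A) 1 := by
    have invOf_isHermitian : (⅟A)ᴴ = ⅟A := by
      rw [invOf_eq_nonsing_inv, hA.isHermitian.inv.eq]
    rw [star_eq_conjTranspose, fromBlocks_conjTranspose, conjTranspose_mul, invOf_isHermitian,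
      conjTranspose_one, conjTranspose_one, conjTranspose_zero]
  rw [fromBlocks_eq_of_invertible₁₁, ← star_U, isUnit_U.posDef_star_left_conjugate_iff,
    posDef_fromBlocks_zero_iff, and_iff_right hA]

end BlockMatrices

theorem posDef_iff_det_pos_of_unique {n R : Type*} [Unique n] [DecidableEq n] [Fintype n]
    [CommRing R] [PartialOrder R] [StarRing R] [StarOrderedRing R] [NoZeroDivisors R] [Nontrivial R]
    {M : Matrix n n R} : M.PosDef ↔ 0 < M.det := by
  have eq_diagonal : M = diagonal fun i ↦ M i i := by
    ext i j
    simp [Subsingleton.elim j i]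
  rw [det_unique, eq_diagonal, posDef_diagonal_iff, Unique.forall_iff, diagonal_apply_eq]

section RCLike

variable {𝕜 : Type*} [RCLike 𝕜]

theorem posDef_fromBlocks_iff_posDef_and_det_pos {m n : Type*} [Fintype m] [DecidableEq m]
    [Fintype n] [DecidableEq n] [Unique n]
    {A : Matrix m m 𝕜} {B : Matrix m n 𝕜} {D : Matrix n n 𝕜} :
    (fromBlocks A B Bᴴ D).PosDef ↔ A.PosDef ∧ 0 < (fromBlocks A B Bᴴ D).det := by
  have posDef_left (h : (fromBlocks A B Bᴴ D).PosDef) : A.PosDef := h.submatrix Sum.inl_injective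
  rw [← and_iff_right_of_imp posDef_left, and_congr_right_iff]
  intro hA
  have := hA.isUnit.invertible
  rw [posDef_fromBlocks_iff_posDef_schurComplement hA, posDef_iff_det_pos_of_unique,
    det_fromBlocks₁₁, mul_pos_iff_of_pos_left hA.det_pos]

theorem posDef_iff_posDef_castSucc_and_det_pos {n : ℕ}
    {M : Matrix (Fin (n + 1)) (Fin (n + 1)) 𝕜} (hM : M.IsHermitian) :
    M.PosDef ↔ (M.submatrix Fin.castSucc Fin.castSucc).PosDef ∧ 0 < M.det := by
  let e : Fin n ⊕ Fin 1 ≃ Fin (n + 1) := finSumFinEquiv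
  let N := M.submatrix e e
  have posDef_N : N.PosDef ↔ M.PosDef :=
    ⟨fun h ↦ by simpa [N] using h.submatrix e.symm.injective, fun h ↦ h.submatrix e.injective⟩
  have N_eq : fromBlocks N.toBlocks₁₁ N.toBlocks₁₂ N.toBlocks₁₂ᴴ N.toBlocks₂₂ = N := by
    have toBlocks₂₁_eq : N.toBlocks₂₁ = N.toBlocks₁₂ᴴ := by
      ext i j
      exact ((hM.submatrix e).apply _ _).symm
    rw [← toBlocks₂₁_eq, fromBlocks_toBlocks]
  have toBlocks₁₁_eq : N.toBlocks₁₁ = M.submatrix Fin.castSucc Fin.castSucc := rfl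
  have det_eq : N.det = M.det := det_submatrix_equiv_self e M
  rw [← posDef_N, ← N_eq, posDef_fromBlocks_iff_posDef_and_det_pos, N_eq, toBlocks₁₁_eq, det_eq]

theorem sylvester_criterion_general {n : ℕ} {M : Matrix (Fin n) (Fin n) 𝕜} (hM : M.IsHermitian) :
    M.PosDef ↔
      ∀ (i : ℕ), 1 ≤ i → ∀ (hin : i ≤ n),
        0 < (M.submatrix (Fin.castLE hin) (Fin.castLE hin)).det := by
  refine ⟨fun h i _ hin ↦ (h.submatrix (Fin.castLE_injective hin)).det_pos, fun h ↦ ?_⟩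
  induction n with
  | zero => exact .of_dotProduct_mulVec_pos hM fun x hx ↦ absurd (Subsingleton.elim x 0) hx
  | succ n ih =>
    rw [posDef_iff_posDef_castSucc_and_det_pos hM]
    exact ⟨ih (hM.submatrix _) fun i hi hin ↦ h i hi (hin.trans n.le_succ),
      h (n + 1) n.succ_pos le_rfl⟩

end RCLike

/-- **Sylvester's criterion.** A real symmetric `n × n` matrix (`n ≥ 1`) is positive
definite if and only if all of its leading principal minors are positive. -/
theorem sylvester_criterion (n : ℕ) (hn : 1 ≤ n)
    (M : Matrix (Fin n) (Fin n) ℝ) (hM : M.IsSymm) :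
    M.PosDef ↔
      ∀ (i : ℕ), 1 ≤ i → ∀ (hin : i ≤ n),
        0 < (M.submatrix (Fin.castLE hin) (Fin.castLE hin)).det :=
  sylvester_criterion_general ((conjTranspose_eq_transpose_of_trivial M).trans hM)
end

section
/- Let C : ℝ^d → ℝ be differentiable with L_i-Lipschitz gradient (L_i > 0), let δ > 0 and γ > 0, and let θ, θ' ∈ ℝ^d satisfy the robust-safe-gradient-flow constraint γδ·C(θ) + ⟨∇C(θ), θ' − θ⟩ + (1/(2δ))·‖θ' − θ‖² ≤ 0. Then C(θ') ≤ (1 − γδ)·C(θ) − (1/2)·(1/δ − L_i)·‖θ' − θ‖². -/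
open scoped RealInnerProductSpace

/-!
The descent inequality for functions with Lipschitz derivative comes from comparing, along the
segment from `x` to `y`, the error of the linearization at `x` with `t ↦ (L / 2) ‖y - x‖² t²`, whose
derivative dominates that of the error. The constraint then bounds the linear term
`⟪∇C(θ), θ' - θ⟫` of this inequality, and both quadratic terms combine.
-/

section DescentInequality

variable {E F : Type*} [NormedAddCommGroup E] [NormedSpace ℝ E] [NormedAddCommGroup F]
  [NormedSpace ℝ F] {s : Set E} {x y : E} {L : ℝ}

theorem norm_image_sub_le_of_norm_hasFDerivWithin_le_mul {f : E → F} {f' : E → E →L[ℝ] F}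
    (hs : StarConvex ℝ x s) (hf : ∀ z ∈ s, HasFDerivWithinAt f (f' z) s z)
    (hf' : ∀ z ∈ s, ‖f' z‖ ≤ L * ‖z - x‖) (hy : y ∈ s) :
    ‖f y - f x‖ ≤ L / 2 * ‖y - x‖ ^ 2 := by
  let p : ℝ → E := AffineMap.lineMap x y
  have p_mem : Set.MapsTo p (Set.Icc 0 1) s := fun t ht =>
    hs.segment_subset hy (lineMap_mem_segment ℝ x y ht)
  have hderiv : ∀ t ∈ Set.Icc (0 : ℝ) 1,
      HasDerivWithinAt (fun t => f (p t) - f x) (f' (p t) (y - x)) (Set.Icc 0 1) t := fun t ht =>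
    ((hf _ (p_mem ht)).comp_hasDerivWithinAt t AffineMap.hasDerivWithinAt_lineMap p_mem).sub_const _
  have hbound : ∀ t ∈ Set.Ico (0 : ℝ) 1, ‖f' (p t) (y - x)‖ ≤ L / 2 * ‖y - x‖ ^ 2 * (2 * t) := by
    intro t ht
    have norm_p_sub : ‖p t - x‖ = t * ‖y - x‖ := by
      rw [← dist_eq_norm, dist_lineMap_left, Real.norm_of_nonneg ht.1, dist_eq_norm']
    calc ‖f' (p t) (y - x)‖ ≤ L * ‖p t - x‖ * ‖y - x‖ :=
          (f' (p t)).le_of_opNorm_le (hf' _ (p_mem (Set.Ico_subset_Icc_self ht))) _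
      _ = L / 2 * ‖y - x‖ ^ 2 * (2 * t) := by rw [norm_p_sub]; ring
  have hcompare := image_norm_le_of_norm_deriv_right_le_deriv_boundary
    (B := fun t => L / 2 * ‖y - x‖ ^ 2 * t ^ 2)
    (fun t ht => (hderiv t ht).continuousWithinAt)
    (fun t ht => (hderiv t (Set.Ico_subset_Icc_self ht)).mono_of_mem_nhdsWithin
      (Icc_mem_nhdsGE_of_mem ht))
    (by simp [p])
    (fun t => by simpa using (hasDerivAt_pow 2 t).const_mul (L / 2 * ‖y - x‖ ^ 2))
    hbound
  simpa [p] using hcompare (Set.right_mem_Icc.2 zero_le_one)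

theorem norm_image_sub_sub_le_of_norm_hasFDerivWithin_sub_le_mul
    {f : E → F} {f' : E → E →L[ℝ] F}
    (hs : StarConvex ℝ x s) (hf : ∀ z ∈ s, HasFDerivWithinAt f (f' z) s z)
    (hf' : ∀ z ∈ s, ‖f' z - f' x‖ ≤ L * ‖z - x‖) (hy : y ∈ s) :
    ‖f y - f x - f' x (y - x)‖ ≤ L / 2 * ‖y - x‖ ^ 2 := by
  have h := norm_image_sub_le_of_norm_hasFDerivWithin_le_mul hs
    (fun z hz => (hf z hz).sub (f' x).hasFDerivWithinAt) hf' hy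
  simpa only [Pi.sub_apply, sub_sub_sub_comm, ← map_sub] using h

theorem image_le_add_of_norm_hasFDerivWithin_sub_le_mul {f : E → ℝ} {f' : E → E →L[ℝ] ℝ}
    (hs : StarConvex ℝ x s) (hf : ∀ z ∈ s, HasFDerivWithinAt f (f' z) s z)
    (hf' : ∀ z ∈ s, ‖f' z - f' x‖ ≤ L * ‖z - x‖) (hy : y ∈ s) :
    f y ≤ f x + f' x (y - x) + L / 2 * ‖y - x‖ ^ 2 := by
  have h := (Real.le_norm_self _).trans
    (norm_image_sub_sub_le_of_norm_hasFDerivWithin_sub_le_mul hs hf hf' hy)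
  linarith

end DescentInequality

theorem rsgf_constraint_descent_general {E : Type*} [NormedAddCommGroup E] [NormedSpace ℝ E]
    {s : Set E} {C : E → ℝ} {C' : E → E →L[ℝ] ℝ} {L δ γ : ℝ} {θ θ' : E}
    (hs : StarConvex ℝ θ s) (hC : ∀ z ∈ s, HasFDerivWithinAt C (C' z) s z)
    (hC' : ∀ z ∈ s, ‖C' z - C' θ‖ ≤ L * ‖z - θ‖) (hδ : δ ≠ 0) (hθ' : θ' ∈ s)
    (hcon : γ * δ * C θ + C' θ (θ' - θ) + 1 / (2 * δ) * ‖θ' - θ‖ ^ 2 ≤ 0) :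
    C θ' ≤ (1 - γ * δ) * C θ - 1 / 2 * (1 / δ - L) * ‖θ' - θ‖ ^ 2 := by
  calc C θ' ≤ C θ + C' θ (θ' - θ) + L / 2 * ‖θ' - θ‖ ^ 2 :=
        image_le_add_of_norm_hasFDerivWithin_sub_le_mul hs hC hC' hθ'
    _ ≤ C θ - γ * δ * C θ - 1 / (2 * δ) * ‖θ' - θ‖ ^ 2 + L / 2 * ‖θ' - θ‖ ^ 2 := by
        linarith
    _ = (1 - γ * δ) * C θ - 1 / 2 * (1 / δ - L) * ‖θ' - θ‖ ^ 2 := by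
        field_simp
        ring

/-- One-step descent inequality for a constraint of the robust safe gradient flow:
if `C` is differentiable with `Lᵢ`-Lipschitz gradient and `(θ, θ')` satisfies the
RSGF constraint `γδ C(θ) + ⟨∇C(θ), θ' - θ⟩ + (1/(2δ))‖θ' - θ‖² ≤ 0`, then
`C(θ') ≤ (1 - γδ) C(θ) - (1/2)(1/δ - Lᵢ)‖θ' - θ‖²`. -/
theorem rsgf_constraint_descent (d : ℕ)
    (C : EuclideanSpace ℝ (Fin d) → ℝ) (Li : ℝ) (hLi : 0 < Li)
    (hdiff : Differentiable ℝ C)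
    (hlip : ∀ x y : EuclideanSpace ℝ (Fin d),
      ‖gradient C x - gradient C y‖ ≤ Li * ‖x - y‖)
    (δ γ : ℝ) (hδ : 0 < δ) (hγ : 0 < γ)
    (θ θ' : EuclideanSpace ℝ (Fin d))
    (hcon : γ * δ * C θ + ⟪gradient C θ, θ' - θ⟫ + (1 / (2 * δ)) * ‖θ' - θ‖ ^ 2 ≤ 0) :
    C θ' ≤ (1 - γ * δ) * C θ - (1 / 2) * (1 / δ - Li) * ‖θ' - θ‖ ^ 2 := by
  refine rsgf_constraint_descent_general
    (C' := fun z => InnerProductSpace.toDual ℝ _ (gradient C z))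
    (starConvex_univ θ) (fun z _ => (hdiff z).hasGradientAt.hasFDerivAt.hasFDerivWithinAt)
    (fun z _ => ?_) hδ.ne' (Set.mem_univ θ') hcon
  simpa only [← map_sub, LinearIsometryEquiv.norm_map] using hlip z θ
end

section
/- Let C : ℝ^d → ℝ be differentiable with L_i-Lipschitz gradient (L_i > 0), let δ > 0 and γ > 0 with δ < 1/γ and δ < 1/L_i, and let θ, θ' ∈ ℝ^d satisfy the robust-safe-gradient-flow constraint γδ·C(θ) + ⟨∇C(θ), θ' − θ⟩ + (1/(2δ))·‖θ' − θ‖² ≤ 0. If C(θ) ≤ 0, then C(θ') ≤ 0. -/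
open scoped RealInnerProductSpace

/-!
Smoothness bounds the first-order Taylor remainder of `C` at `θ` by `(L / 2) ‖θ' - θ‖ ^ 2`, which
is at most `(1 / (2 δ)) ‖θ' - θ‖ ^ 2`. The RSGF constraint then gives `C θ' ≤ (1 - γ δ) C θ`, and
the right side is nonpositive because `γ δ ≤ 1`.
-/

section

variable {E F : Type*} [NormedAddCommGroup E] [NormedSpace ℝ E]
  [NormedAddCommGroup F] [NormedSpace ℝ F]

theorem norm_image_sub_sub_le_of_norm_hasDerivWithinAt_sub_le {g g' : ℝ → F} {a b K : ℝ}
    (hab : a ≤ b)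
    (hg : ∀ t ∈ Set.Icc a b, HasDerivWithinAt g (g' t) (Set.Icc a b) t)
    (hK : ∀ t ∈ Set.Ico a b, ‖g' t - g' a‖ ≤ K * (t - a)) :
    ‖g b - g a - (b - a) • g' a‖ ≤ K / 2 * (b - a) ^ 2 := by
  let r : ℝ → F := fun t ↦ g t - g a - (t - a) • g' a
  have deriv_r : ∀ t ∈ Set.Icc a b, HasDerivWithinAt r (g' t - g' a) (Set.Icc a b) t :=
    fun t ht ↦ (((hg t ht).sub_const (g a)).sub
      (((hasDerivWithinAt_id t _).sub_const a).smul_const (g' a))).congr_deriv (by rw [one_smul])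
  have deriv_bound : ∀ t : ℝ, HasDerivAt (fun t ↦ K / 2 * (t - a) ^ 2) (K * (t - a)) t :=
    fun t ↦ ((((hasDerivAt_id' t).sub_const a).fun_pow 2).const_mul (K / 2)).congr_deriv (by ring)
  exact image_norm_le_of_norm_deriv_right_le_deriv_boundary
    (fun t ht ↦ (deriv_r t ht).continuousWithinAt)
    (fun t ht ↦ (deriv_r t (Set.Ico_subset_Icc_self ht)).mono_of_mem_nhdsWithin
      (Icc_mem_nhdsGE_of_mem ht))
    (by simp [r]) deriv_bound hK (Set.right_mem_Icc.2 hab)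

theorem hasDerivWithinAt_comp_lineMap {f : E → F} {f' : E →L[ℝ] F} {x y : E} {t : ℝ}
    (hf : HasFDerivWithinAt f f' (segment ℝ x y) (AffineMap.lineMap x y t)) :
    HasDerivWithinAt (fun t : ℝ ↦ f (AffineMap.lineMap x y t)) (f' (y - x)) (Set.Icc 0 1) t :=
  hf.comp_hasDerivWithinAt t AffineMap.hasDerivWithinAt_lineMap
    fun _ ↦ lineMap_mem_segment ℝ x y

theorem norm_image_sub_sub_le_of_norm_hasFDerivWithinAt_sub_le {f : E → F} {f' : E → E →L[ℝ] F}
    {L : ℝ} {x y : E}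
    (hf : ∀ z ∈ segment ℝ x y, HasFDerivWithinAt f (f' z) (segment ℝ x y) z)
    (hL : ∀ z ∈ segment ℝ x y, ‖f' z - f' x‖ ≤ L * ‖z - x‖) :
    ‖f y - f x - f' x (y - x)‖ ≤ L / 2 * ‖y - x‖ ^ 2 := by
  let p : ℝ → E := AffineMap.lineMap x y
  have deriv_sub_le : ∀ t ∈ Set.Ico (0 : ℝ) 1,
      ‖f' (p t) (y - x) - f' (p 0) (y - x)‖ ≤ L * ‖y - x‖ ^ 2 * (t - 0) := fun t ht ↦
    calc
      ‖f' (p t) (y - x) - f' (p 0) (y - x)‖ = ‖(f' (p t) - f' x) (y - x)‖ := by simp [p]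
      _ ≤ ‖f' (p t) - f' x‖ * ‖y - x‖ := (f' (p t) - f' x).le_opNorm (y - x)
      _ ≤ L * ‖p t - x‖ * ‖y - x‖ := by
        gcongr
        exact hL _ (lineMap_mem_segment ℝ x y (Set.Ico_subset_Icc_self ht))
      _ = L * (t * ‖y - x‖) * ‖y - x‖ := by
        rw [← dist_eq_norm (p t), dist_lineMap_left, Real.norm_of_nonneg ht.1, dist_eq_norm']
      _ = L * ‖y - x‖ ^ 2 * (t - 0) := by ring
  have taylor := norm_image_sub_sub_le_of_norm_hasDerivWithinAt_sub_le zero_le_one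
    (fun t ht ↦ hasDerivWithinAt_comp_lineMap (hf _ (lineMap_mem_segment ℝ x y ht))) deriv_sub_le
  simpa [mul_div_right_comm] using taylor

theorem rsgf_single_step_invariance_general {C : E → ℝ} {C' : E → E →L[ℝ] ℝ} {L δ γ : ℝ}
    {θ θ' : E}
    (hC : ∀ z ∈ segment ℝ θ θ', HasFDerivWithinAt C (C' z) (segment ℝ θ θ') z)
    (hL : ∀ z ∈ segment ℝ θ θ', ‖C' z - C' θ‖ ≤ L * ‖z - θ‖)
    (hδ : 0 < δ) (hδγ : δ * γ ≤ 1) (hδL : δ * L ≤ 1)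
    (hcon : γ * δ * C θ + C' θ (θ' - θ) + (1 / (2 * δ)) * ‖θ' - θ‖ ^ 2 ≤ 0)
    (h0 : C θ ≤ 0) :
    C θ' ≤ 0 := by
  have taylor : C θ' - C θ - C' θ (θ' - θ) ≤ L / 2 * ‖θ' - θ‖ ^ 2 :=
    (Real.le_norm_self _).trans (norm_image_sub_sub_le_of_norm_hasFDerivWithinAt_sub_le hC hL)
  have half_L_le : L / 2 ≤ 1 / (2 * δ) := by
    rw [div_le_div_iff₀ two_pos (by positivity)]
    linarith
  calc
    C θ' ≤ C θ + C' θ (θ' - θ) + L / 2 * ‖θ' - θ‖ ^ 2 := by linarith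
    _ ≤ C θ + C' θ (θ' - θ) + 1 / (2 * δ) * ‖θ' - θ‖ ^ 2 := by gcongr
    _ ≤ (1 - δ * γ) * C θ := by linarith
    _ ≤ 0 := mul_nonpos_of_nonneg_of_nonpos (sub_nonneg.2 hδγ) h0

end

/-- Single-step forward invariance of the robust safe gradient flow: if `C` is
differentiable with `Lᵢ`-Lipschitz gradient, `δ < 1/γ`, `δ < 1/Lᵢ`, the pair
`(θ, θ')` satisfies the RSGF constraint, and `C(θ) ≤ 0`, then `C(θ') ≤ 0`. -/
theorem rsgf_single_step_invariance (d : ℕ)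
    (C : EuclideanSpace ℝ (Fin d) → ℝ) (Li : ℝ) (hLi : 0 < Li)
    (hdiff : Differentiable ℝ C)
    (hlip : ∀ x y : EuclideanSpace ℝ (Fin d),
      ‖gradient C x - gradient C y‖ ≤ Li * ‖x - y‖)
    (δ γ : ℝ) (hδ : 0 < δ) (hγ : 0 < γ) (hδγ : δ < 1 / γ) (hδL : δ < 1 / Li)
    (θ θ' : EuclideanSpace ℝ (Fin d))
    (hcon : γ * δ * C θ + ⟪gradient C θ, θ' - θ⟫ + (1 / (2 * δ)) * ‖θ' - θ‖ ^ 2 ≤ 0)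
    (h0 : C θ ≤ 0) :
    C θ' ≤ 0 :=
  rsgf_single_step_invariance_general
    (fun z _ ↦ (hdiff z).hasGradientAt.hasFDerivAt.hasFDerivWithinAt)
    (fun z _ ↦ by simpa only [← map_sub, LinearIsometryEquiv.norm_map] using hlip z θ)
    hδ ((lt_div_iff₀ hγ).1 hδγ).le ((lt_div_iff₀ hLi).1 hδL).le hcon h0
end

section
/- Let q ∈ ℕ, q ≥ 1, and for each i ∈ {1,…,q} let C_i : ℝ^d → ℝ be differentiable with L_i-Lipschitz gradient (L_i > 0). Let δ > 0 and γ > 0 satisfy δ < 1/γ and δ < 1/L_i for all i. Let (θ_k)_{k∈ℕ} be a sequence in ℝ^d such that for every k and every i ∈ {1,…,q}, γδ·C_i(θ_k) + ⟨∇C_i(θ_k), θ_{k+1} − θ_k⟩ + (1/(2δ))·‖θ_{k+1} − θ_k‖² ≤ 0. If C_i(θ_0) ≤ 0 for all i ∈ {1,…,q}, then C_i(θ_k) ≤ 0 for all i ∈ {1,…,q} and all k ∈ ℕ. -/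
open scoped RealInnerProductSpace

/-!
The descent lemma bounds `C (θ (k + 1))` by the first-order model of `C` at `θ k` plus
`L / 2 * ‖θ (k + 1) - θ k‖ ^ 2`. As `L ≤ 1 / δ`, the quadratic term of the step constraint absorbs
this error, which leaves `C (θ (k + 1)) ≤ (1 - γ * δ) * C (θ k)` with a nonnegative factor, for each
constraint separately.
-/

section Taylor

open Set

variable {E F : Type*} [NormedAddCommGroup E] [NormedSpace ℝ E]
  [NormedAddCommGroup F] [NormedSpace ℝ F]

theorem norm_image_sub_sub_le_of_norm_deriv_right_sub_le {a b K : ℝ} {f f' : ℝ → F}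
    (hab : a ≤ b) (hf : ContinuousOn f (Icc a b))
    (hf' : ∀ t ∈ Ico a b, HasDerivWithinAt f (f' t) (Ici t) t)
    (bound : ∀ t ∈ Ico a b, ‖f' t - f' a‖ ≤ K * (t - a)) :
    ‖f b - f a - (b - a) • f' a‖ ≤ K / 2 * (b - a) ^ 2 := by
  have remainder_cont : ContinuousOn (fun t ↦ f t - f a - (t - a) • f' a) (Icc a b) := by fun_prop
  have remainder_deriv (t : ℝ) (ht : t ∈ Ico a b) :
      HasDerivWithinAt (fun t ↦ f t - f a - (t - a) • f' a) (f' t - f' a) (Ici t) t := by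
    simpa only [one_smul, id] using ((hf' t ht).sub_const (f a)).fun_sub
      (((hasDerivWithinAt_id t _).sub_const a).smul_const (f' a))
  have quadratic_deriv (t : ℝ) :
      HasDerivAt (fun t ↦ K / 2 * (t - a) ^ 2) (K * (t - a)) t := by
    refine ((((hasDerivAt_id t).sub_const a).pow 2).const_mul (K / 2)).congr_deriv ?_
    simp only [id]
    ring
  exact image_norm_le_of_norm_deriv_right_le_deriv_boundary remainder_cont remainder_deriv
    (by simp) quadratic_deriv bound (right_mem_Icc.mpr hab)

theorem norm_image_sub_sub_le_of_norm_fderiv_sub_le {f : E → F} {f' : E → E →L[ℝ] F}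
    {s : Set E} {x y : E} {L : ℝ} (hs : Convex ℝ s) (hx : x ∈ s) (hy : y ∈ s)
    (hf : ∀ z ∈ s, HasFDerivWithinAt f (f' z) s z)
    (hf' : ∀ z ∈ s, ‖f' z - f' x‖ ≤ L * ‖z - x‖) :
    ‖f y - f x - f' x (y - x)‖ ≤ L / 2 * ‖y - x‖ ^ 2 := by
  let path : ℝ → E := AffineMap.lineMap x y
  have path_mem : MapsTo path (Icc 0 1) s := hs.mapsTo_lineMap hx hy
  have deriv_comp (t : ℝ) (ht : t ∈ Icc (0 : ℝ) 1) :
      HasDerivWithinAt (f ∘ path) (f' (path t) (y - x)) (Icc 0 1) t :=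
    (hf (path t) (path_mem ht)).comp_hasDerivWithinAt t AffineMap.hasDerivWithinAt_lineMap path_mem
  have deriv_bound (t : ℝ) (ht : t ∈ Ico (0 : ℝ) 1) :
      ‖f' (path t) (y - x) - f' (path 0) (y - x)‖ ≤ L * ‖y - x‖ ^ 2 * (t - 0) := by
    have norm_path_sub : ‖path t - x‖ = t * ‖y - x‖ := by
      simp [path, AffineMap.lineMap_apply, norm_smul, abs_of_nonneg ht.1]
    calc ‖f' (path t) (y - x) - f' (path 0) (y - x)‖
        = ‖(f' (path t) - f' x) (y - x)‖ := by simp [path]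
      _ ≤ L * ‖path t - x‖ * ‖y - x‖ :=
        (f' (path t) - f' x).le_of_opNorm_le (hf' _ (path_mem (Ico_subset_Icc_self ht))) _
      _ = L * ‖y - x‖ ^ 2 * (t - 0) := by rw [norm_path_sub]; ring
  have remainder_le := norm_image_sub_sub_le_of_norm_deriv_right_sub_le zero_le_one
    (fun t ht ↦ (deriv_comp t ht).continuousWithinAt)
    (fun t ht ↦ (deriv_comp t (Ico_subset_Icc_self ht)).mono_of_mem_nhdsWithin
      (Icc_mem_nhdsGE_of_mem ht))
    deriv_bound
  simpa [path, mul_div_right_comm] using remainder_le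

end Taylor

section SafeStep

variable {E : Type*} [NormedAddCommGroup E] [NormedSpace ℝ E]
  {C : E → ℝ} {C' : E → E →L[ℝ] ℝ} {s : Set E} {L δ γ : ℝ}

theorem le_one_sub_mul_of_safe_step {x y : E} (hs : Convex ℝ s) (hx : x ∈ s) (hy : y ∈ s)
    (hC : ∀ z ∈ s, HasFDerivWithinAt C (C' z) s z)
    (hC' : ∀ z ∈ s, ‖C' z - C' x‖ ≤ L * ‖z - x‖)
    (hδ : 0 < δ) (hLδ : L * δ ≤ 1)
    (hstep : γ * δ * C x + C' x (y - x) + 1 / (2 * δ) * ‖y - x‖ ^ 2 ≤ 0) :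
    C y ≤ (1 - γ * δ) * C x := by
  have descent : C y - C x - C' x (y - x) ≤ L / 2 * ‖y - x‖ ^ 2 :=
    (le_abs_self _).trans (norm_image_sub_sub_le_of_norm_fderiv_sub_le hs hx hy hC hC')
  have curvature : L / 2 ≤ 1 / (2 * δ) := by
    rw [div_le_div_iff₀ two_pos (by positivity)]
    linarith
  have absorb : L / 2 * ‖y - x‖ ^ 2 ≤ 1 / (2 * δ) * ‖y - x‖ ^ 2 := by gcongr
  linarith

theorem rsgf_iterates_feasible_general {θ : ℕ → E} (hs : Convex ℝ s) (hθ : ∀ k, θ k ∈ s)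
    (hC : ∀ x ∈ s, HasFDerivWithinAt C (C' x) s x)
    (hC' : ∀ x ∈ s, ∀ y ∈ s, ‖C' x - C' y‖ ≤ L * ‖x - y‖)
    (hδ : 0 < δ) (hγδ : γ * δ ≤ 1) (hLδ : L * δ ≤ 1)
    (hstep : ∀ k, γ * δ * C (θ k) + C' (θ k) (θ (k + 1) - θ k) +
      1 / (2 * δ) * ‖θ (k + 1) - θ k‖ ^ 2 ≤ 0)
    (h0 : C (θ 0) ≤ 0) (k : ℕ) :
    C (θ k) ≤ 0 := by
  induction k with
  | zero => exact h0
  | succ k ih =>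
    calc C (θ (k + 1))
        ≤ (1 - γ * δ) * C (θ k) :=
          le_one_sub_mul_of_safe_step hs (hθ k) (hθ (k + 1)) hC (fun z hz ↦ hC' z hz _ (hθ k))
            hδ hLδ (hstep k)
      _ ≤ 0 := mul_nonpos_of_nonneg_of_nonpos (sub_nonneg.mpr hγδ) ih

end SafeStep

/-- Constraint satisfaction along the robust safe gradient flow iterates
(item (i) of the paper's Proposition): if all constraints `C i` are differentiable
with `L i`-Lipschitz gradients, `δ < 1/γ` and `δ < 1/(L i)` for all `i`, every step
of the sequence satisfies the RSGF constraints, and the initial point is feasible,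
then all iterates are feasible. -/
theorem rsgf_iterates_feasible (d q : ℕ) (hq : 1 ≤ q)
    (C : Fin q → EuclideanSpace ℝ (Fin d) → ℝ)
    (L : Fin q → ℝ) (hL : ∀ i, 0 < L i)
    (hdiff : ∀ i, Differentiable ℝ (C i))
    (hlip : ∀ i, ∀ x y : EuclideanSpace ℝ (Fin d),
      ‖gradient (C i) x - gradient (C i) y‖ ≤ L i * ‖x - y‖)
    (δ γ : ℝ) (hδ : 0 < δ) (hγ : 0 < γ)
    (hδγ : δ < 1 / γ) (hδL : ∀ i, δ < 1 / L i)
    (θ : ℕ → EuclideanSpace ℝ (Fin d))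
    (hcon : ∀ (k : ℕ) (i : Fin q),
      γ * δ * C i (θ k) + ⟪gradient (C i) (θ k), θ (k + 1) - θ k⟫ +
        (1 / (2 * δ)) * ‖θ (k + 1) - θ k‖ ^ 2 ≤ 0)
    (h0 : ∀ i, C i (θ 0) ≤ 0) :
    ∀ (k : ℕ) (i : Fin q), C i (θ k) ≤ 0 := by
  intro k i
  exact rsgf_iterates_feasible_general
    (C' := fun x ↦ InnerProductSpace.toDual ℝ _ (gradient (C i) x))
    convex_univ (fun _ ↦ Set.mem_univ _)
    (fun x _ ↦ (hdiff i x).hasGradientAt.hasFDerivAt.hasFDerivWithinAt)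
    (fun x _ y _ ↦ by simpa only [← map_sub, LinearIsometryEquiv.norm_map] using hlip i x y)
    hδ ((lt_div_iff₀' hγ).mp hδγ).le ((lt_div_iff₀' (hL i)).mp (hδL i)).le
    (fun k ↦ hcon k i) (h0 i) k
end

section
/- Let f : ℝ^d → ℝ be differentiable with L-Lipschitz gradient (L > 0), let ε > 0, and let 0 < δ < 1/L. Let θ, θ' ∈ ℝ^d and g ∈ ℝ^d satisfy: (a) ‖g − ∇f(θ)‖ ≤ ε; (b) the variational inequality at y = θ, namely ⟨θ − θ', g + (1/δ)(θ' − θ)⟩ ≥ 0. If ‖θ' − θ‖ > 4ε/L, then f(θ') − f(θ) < −4ε²/L. -/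
open scoped RealInnerProductSpace

/-!
For a displacement `v = θ' - θ` of length `r`, the quadratic upper bound on `f`, the error bound on
`g` and the variational inequality together give `f θ' - f θ ≤ ε r - (1/δ - L/2) r²`, which is at
most `ε r - (L/2) r²` because `L ≤ 1/δ`. Adding `4ε²/L` turns the latter into
`-(L r - 4ε) (L r + 2ε) / (2L)`, so the decrease exceeds `4ε²/L` once `r > 4ε/L`.
-/

section FirstOrderTaylor

open Set

variable {E F : Type*} [NormedAddCommGroup E] [NormedSpace ℝ E] [NormedAddCommGroup F]
  [NormedSpace ℝ F]

theorem norm_sub_sub_smul_le_of_norm_deriv_sub_le {f f' : ℝ → F} {a b C : ℝ} (hab : a ≤ b)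
    (hf : ∀ t ∈ Icc a b, HasDerivWithinAt f (f' t) (Icc a b) t)
    (hf' : ∀ t ∈ Ico a b, ‖f' t - f' a‖ ≤ C * (t - a)) :
    ‖f b - f a - (b - a) • f' a‖ ≤ C / 2 * (b - a) ^ 2 := by
  have remainder_deriv : ∀ t ∈ Icc a b,
      HasDerivWithinAt (fun s ↦ f s - f a - (s - a) • f' a) (f' t - f' a) (Icc a b) t := by
    intro t ht
    simpa only [one_smul] using
      ((hf t ht).sub_const (f a)).fun_sub
        (((hasDerivAt_id' t).hasDerivWithinAt.sub_const a).smul_const (f' a))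
  have quadratic_deriv (t : ℝ) :
      HasDerivAt (fun s ↦ C / 2 * (s - a) ^ 2) (C * (t - a)) t := by
    refine ((((hasDerivAt_id' t).sub_const a).fun_pow 2).const_mul (C / 2)).congr_deriv ?_
    ring
  exact image_norm_le_of_norm_deriv_right_le_deriv_boundary
    (fun t ht ↦ (remainder_deriv t ht).continuousWithinAt)
    (fun t ht ↦ (remainder_deriv t (Ico_subset_Icc_self ht)).mono_of_mem_nhdsWithin
      (Icc_mem_nhdsGE_of_mem ht))
    (by simp) quadratic_deriv hf' (right_mem_Icc.2 hab)

theorem norm_sub_sub_fderiv_le_of_forall_mem_segment {f : E → F} {f' : E → E →L[ℝ] F} {x y : E}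
    {C : ℝ} (hf : ∀ z ∈ segment ℝ x y, HasFDerivWithinAt f (f' z) (segment ℝ x y) z)
    (hf' : ∀ z ∈ segment ℝ x y, ‖f' z - f' x‖ ≤ C * ‖z - x‖) :
    ‖f y - f x - f' x (y - x)‖ ≤ C / 2 * ‖y - x‖ ^ 2 := by
  let γ : ℝ → E := AffineMap.lineMap x y
  have γ_mem : MapsTo γ (Icc 0 1) (segment ℝ x y) := fun _ ht ↦ lineMap_mem_segment ℝ x y ht
  have deriv_along : ∀ t ∈ Icc (0 : ℝ) 1,
      HasDerivWithinAt (f ∘ γ) (f' (γ t) (y - x)) (Icc 0 1) t := fun t ht ↦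
    (hf _ (γ_mem ht)).comp_hasDerivWithinAt t AffineMap.hasDerivWithinAt_lineMap γ_mem
  have deriv_bound : ∀ t ∈ Ico (0 : ℝ) 1,
      ‖f' (γ t) (y - x) - f' (γ 0) (y - x)‖ ≤ C * ‖y - x‖ ^ 2 * (t - 0) := by
    intro t ht
    have γ_sub : ‖γ t - x‖ = t * ‖y - x‖ := by
      simp [γ, AffineMap.lineMap_apply, norm_smul, abs_of_nonneg ht.1]
    calc ‖f' (γ t) (y - x) - f' (γ 0) (y - x)‖
        = ‖(f' (γ t) - f' x) (y - x)‖ := by simp [γ]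
      _ ≤ ‖f' (γ t) - f' x‖ * ‖y - x‖ := ContinuousLinearMap.le_opNorm _ _
      _ ≤ C * ‖γ t - x‖ * ‖y - x‖ := by
          gcongr
          exact hf' _ (γ_mem (Ico_subset_Icc_self ht))
      _ = C * ‖y - x‖ ^ 2 * (t - 0) := by rw [γ_sub]; ring
  convert norm_sub_sub_smul_le_of_norm_deriv_sub_le zero_le_one deriv_along deriv_bound using 1
  · simp [γ]
  · ring

end FirstOrderTaylor

section InnerProduct

variable {E : Type*} [NormedAddCommGroup E] [InnerProductSpace ℝ E]

theorem inner_sub_add_smul_nonneg_iff {x y g : E} {c : ℝ} :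
    0 ≤ ⟪x - y, g + c • (y - x)⟫ ↔ ⟪g, y - x⟫ ≤ -(c * ‖y - x‖ ^ 2) := by
  rw [← neg_sub y x, inner_neg_left, inner_add_right, real_inner_smul_right,
    real_inner_self_eq_norm_sq, real_inner_comm, neg_nonneg, ← le_neg_iff_add_nonpos_right]

theorem inner_le_inner_add_of_norm_sub_le {g g' v : E} {ε : ℝ} (h : ‖g - g'‖ ≤ ε) :
    ⟪g', v⟫ ≤ ⟪g, v⟫ + ε * ‖v‖ := by
  have error_bound : ⟪g' - g, v⟫ ≤ ε * ‖v‖ :=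
    (real_inner_le_norm _ _).trans (by rw [norm_sub_rev]; gcongr)
  rw [inner_sub_left] at error_bound
  linarith

end InnerProduct

section Descent

variable {E : Type*} [NormedAddCommGroup E] [InnerProductSpace ℝ E] [CompleteSpace E]
  {f : E → ℝ} {f' : E → E} {x y g : E} {L ε c : ℝ}

theorem le_add_inner_add_sq_of_forall_mem_segment
    (hf : ∀ z ∈ segment ℝ x y, HasGradientWithinAt f (f' z) (segment ℝ x y) z)
    (hf' : ∀ z ∈ segment ℝ x y, ‖f' z - f' x‖ ≤ L * ‖z - x‖) :
    f y ≤ f x + ⟪f' x, y - x⟫ + L / 2 * ‖y - x‖ ^ 2 := by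
  have taylor := norm_sub_sub_fderiv_le_of_forall_mem_segment
    (fun z hz ↦ (hf z hz).hasFDerivWithinAt)
    (fun z hz ↦ by simpa only [← map_sub, LinearIsometryEquiv.norm_map] using hf' z hz)
  rw [InnerProductSpace.toDual_apply_apply] at taylor
  linarith [(Real.le_norm_self _).trans taylor]

theorem sub_le_of_variational_inequality_of_norm_sub_le
    (hf : ∀ z ∈ segment ℝ x y, HasGradientWithinAt f (f' z) (segment ℝ x y) z)
    (hf' : ∀ z ∈ segment ℝ x y, ‖f' z - f' x‖ ≤ L * ‖z - x‖)
    (hg : ‖g - f' x‖ ≤ ε) (hvi : 0 ≤ ⟪x - y, g + c • (y - x)⟫) :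
    f y - f x ≤ ε * ‖y - x‖ - (c - L / 2) * ‖y - x‖ ^ 2 := by
  have descent := le_add_inner_add_sq_of_forall_mem_segment hf hf'
  have inexact := inner_le_inner_add_of_norm_sub_le (v := y - x) hg
  have step := inner_sub_add_smul_nonneg_iff.1 hvi
  linarith

end Descent

theorem mul_sub_half_mul_sq_lt_of_four_mul_div_lt {L ε r : ℝ} (hL : 0 < L) (hε : 0 ≤ ε)
    (hr : 4 * ε / L < r) : ε * r - L / 2 * r ^ 2 < -(4 * ε ^ 2 / L) := by
  have far : 0 < L * r - 4 * ε := by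
    rw [div_lt_iff₀' hL] at hr
    linarith
  have factorization :
      ε * r - L / 2 * r ^ 2 + 4 * ε ^ 2 / L = -((L * r - 4 * ε) * (L * r + 2 * ε) / (2 * L)) := by
    field_simp
    ring
  have : 0 < (L * r - 4 * ε) * (L * r + 2 * ε) / (2 * L) :=
    div_pos (mul_pos far (by linarith)) (by linarith)
  linarith

theorem rsgf_inexact_sufficient_decrease_general {E : Type*} [NormedAddCommGroup E]
    [InnerProductSpace ℝ E] [CompleteSpace E] {f : E → ℝ} {f' : E → E} {θ θ' g : E} {L ε δ : ℝ}
    (hL : 0 < L)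
    (hf : ∀ z ∈ segment ℝ θ θ', HasGradientWithinAt f (f' z) (segment ℝ θ θ') z)
    (hf' : ∀ z ∈ segment ℝ θ θ', ‖f' z - f' θ‖ ≤ L * ‖z - θ‖)
    (hδ0 : 0 < δ) (hδ : δ ≤ 1 / L) (hg : ‖g - f' θ‖ ≤ ε)
    (hvi : 0 ≤ ⟪θ - θ', g + (1 / δ) • (θ' - θ)⟫) (hfar : 4 * ε / L < ‖θ' - θ‖) :
    f θ' - f θ < -(4 * ε ^ 2 / L) := by
  have hLδ : L ≤ 1 / δ := (le_one_div hδ0 hL).1 hδ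
  calc f θ' - f θ
      ≤ ε * ‖θ' - θ‖ - (1 / δ - L / 2) * ‖θ' - θ‖ ^ 2 :=
        sub_le_of_variational_inequality_of_norm_sub_le hf hf' hg hvi
    _ ≤ ε * ‖θ' - θ‖ - L / 2 * ‖θ' - θ‖ ^ 2 := by
        gcongr
        linarith
    _ < -(4 * ε ^ 2 / L) :=
        mul_sub_half_mul_sq_lt_of_four_mul_div_lt hL ((norm_nonneg _).trans hg) hfar

/-- Sufficient decrease of the objective under an inexact-gradient RSGF step:
if `f` is differentiable with `L`-Lipschitz gradient, `0 < δ < 1/L`, the inexact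
gradient `g` satisfies `‖g - ∇f(θ)‖ ≤ ε`, the variational inequality
`⟨θ - θ', g + (1/δ)(θ' - θ)⟩ ≥ 0` holds, and `‖θ' - θ‖ > 4ε/L`, then
`f(θ') - f(θ) < -4ε²/L`. -/
theorem rsgf_inexact_sufficient_decrease (d : ℕ)
    (f : EuclideanSpace ℝ (Fin d) → ℝ) (L : ℝ) (hL : 0 < L)
    (hdiff : Differentiable ℝ f)
    (hlip : ∀ x y : EuclideanSpace ℝ (Fin d),
      ‖gradient f x - gradient f y‖ ≤ L * ‖x - y‖)
    (ε : ℝ) (hε : 0 < ε) (δ : ℝ) (hδ0 : 0 < δ) (hδ : δ < 1 / L)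
    (θ θ' g : EuclideanSpace ℝ (Fin d))
    (ha : ‖g - gradient f θ‖ ≤ ε)
    (hb : 0 ≤ ⟪θ - θ', g + (1 / δ) • (θ' - θ)⟫)
    (hfar : 4 * ε / L < ‖θ' - θ‖) :
    f θ' - f θ < -(4 * ε ^ 2 / L) := by
  exact rsgf_inexact_sufficient_decrease_general hL
    (fun z _ ↦ (hdiff z).hasGradientAt.hasFDerivAt.hasFDerivWithinAt)
    (fun z _ ↦ hlip z θ) hδ0 hδ.le ha hb hfar
end

section
/- Let C : ℝ^d → ℝ be differentiable with L_i-Lipschitz gradient (L_i > 0), let δ > 0 and γ > 0 with γδ < 1 and δ ≤ 1/L_i, and let θ, θ' ∈ ℝ^d satisfy γδ·C(θ) + ⟨∇C(θ), θ' − θ⟩ + (1/(2δ))·‖θ' − θ‖² ≤ 0. If C(θ) > 0, then C(θ') < C(θ). -/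
open scoped RealInnerProductSpace

/-!
The descent lemma bounds `C θ'` by the quadratic model
`C θ + ⟪∇C θ, θ' - θ⟫ + L / 2 * ‖θ' - θ‖ ^ 2`. Since `L ≤ 1 / δ`, the constraint on `(θ, θ')` says
that this model is at most `C θ - γ * δ * C θ`, so the step scales the violation `C θ` by a factor
of at most `1 - γ * δ`.
-/

section Taylor

open Set

variable {E F : Type*} [NormedAddCommGroup E] [NormedSpace ℝ E]
  [NormedAddCommGroup F] [NormedSpace ℝ F]

theorem norm_image_sub_sub_smul_deriv_le_of_norm_deriv_sub_le_segment
    {g g' : ℝ → F} {a b K : ℝ}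
    (hg : ∀ t ∈ Icc a b, HasDerivWithinAt g (g' t) (Icc a b) t)
    (hK : ∀ t ∈ Ico a b, ‖g' t - g' a‖ ≤ K * (t - a)) :
    ∀ t ∈ Icc a b, ‖g t - g a - (t - a) • g' a‖ ≤ K / 2 * (t - a) ^ 2 := by
  have hasDerivWithinAt_remainder (t : ℝ) (ht : t ∈ Icc a b) :
      HasDerivWithinAt (fun t ↦ g t - g a - (t - a) • g' a) (g' t - g' a) (Icc a b) t := by
    simpa using ((hg t ht).sub_const (g a)).fun_sub
      (((hasDerivWithinAt_id t _).sub_const a).smul_const (g' a))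
  have hasDerivAt_bound (t : ℝ) :
      HasDerivAt (fun t ↦ K / 2 * (t - a) ^ 2) (K * (t - a)) t := by
    refine ((((hasDerivAt_id t).sub_const a).pow 2).const_mul (K / 2)).congr_deriv ?_
    simp only [id_eq]
    ring
  exact image_norm_le_of_norm_deriv_right_le_deriv_boundary
    (fun t ht ↦ (hasDerivWithinAt_remainder t ht).continuousWithinAt)
    (fun t ht ↦ (hasDerivWithinAt_remainder t (Ico_subset_Icc_self ht)).mono_of_mem_nhdsWithin
      (Icc_mem_nhdsGE_of_mem ht))
    (by simp) hasDerivAt_bound hK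

theorem norm_image_sub_sub_fderiv_le_of_norm_fderiv_sub_le_segment
    {f : E → F} {f' : E → E →L[ℝ] F} {x y : E} {L : ℝ}
    (hf : ∀ z ∈ segment ℝ x y, HasFDerivWithinAt f (f' z) (segment ℝ x y) z)
    (hL : ∀ z ∈ segment ℝ x y, ‖f' z - f' x‖ ≤ L * ‖z - x‖) :
    ‖f y - f x - f' x (y - x)‖ ≤ L / 2 * ‖y - x‖ ^ 2 := by
  let line : ℝ → E := AffineMap.lineMap x y
  have line_mem : MapsTo line (Icc 0 1) (segment ℝ x y) := by
    rw [segment_eq_image_lineMap]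
    exact mapsTo_image _ _
  have hasDerivWithinAt_comp (t : ℝ) (ht : t ∈ Icc (0 : ℝ) 1) :
      HasDerivWithinAt (f ∘ line) (f' (line t) (y - x)) (Icc 0 1) t :=
    (hf _ (line_mem ht)).comp_hasDerivWithinAt t AffineMap.hasDerivWithinAt_lineMap line_mem
  have deriv_bound (t : ℝ) (ht : t ∈ Ico (0 : ℝ) 1) :
      ‖f' (line t) (y - x) - f' (line 0) (y - x)‖ ≤ L * ‖y - x‖ ^ 2 * (t - 0) :=
    calc ‖f' (line t) (y - x) - f' (line 0) (y - x)‖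
        = ‖(f' (line t) - f' x) (y - x)‖ := by simp [line]
      _ ≤ L * ‖line t - x‖ * ‖y - x‖ :=
          (f' (line t) - f' x).le_of_opNorm_le (hL _ (line_mem (Ico_subset_Icc_self ht))) _
      _ = L * ‖y - x‖ ^ 2 * (t - 0) := by
          rw [← vsub_eq_sub (line t) x, AffineMap.lineMap_vsub_left, vsub_eq_sub, norm_smul,
            Real.norm_of_nonneg ht.1]
          ring
  have remainder_le := norm_image_sub_sub_smul_deriv_le_of_norm_deriv_sub_le_segment
    hasDerivWithinAt_comp deriv_bound 1 (right_mem_Icc.2 zero_le_one)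
  simpa [line, mul_div_right_comm] using remainder_le

end Taylor

section Gradient

variable {E : Type*} [NormedAddCommGroup E] [InnerProductSpace ℝ E] [CompleteSpace E]

theorem image_le_add_inner_gradient_add_of_norm_gradient_sub_le_segment
    {f : E → ℝ} {x y : E} {L : ℝ}
    (hf : ∀ z ∈ segment ℝ x y, DifferentiableAt ℝ f z)
    (hL : ∀ z ∈ segment ℝ x y, ‖gradient f z - gradient f x‖ ≤ L * ‖z - x‖) :
    f y ≤ f x + ⟪gradient f x, y - x⟫ + L / 2 * ‖y - x‖ ^ 2 := by
  have fderiv_bound (z : E) (hz : z ∈ segment ℝ x y) :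
      ‖fderiv ℝ f z - fderiv ℝ f x‖ ≤ L * ‖z - x‖ := by
    rw [← toDual_gradient, ← toDual_gradient, ← map_sub, LinearIsometryEquiv.norm_map]
    exact hL z hz
  have remainder_le := norm_image_sub_sub_fderiv_le_of_norm_fderiv_sub_le_segment
    (fun z hz ↦ (hf z hz).hasFDerivAt.hasFDerivWithinAt) fderiv_bound
  rw [inner_gradient_left]
  linarith [Real.le_norm_self (f y - f x - fderiv ℝ f x (y - x))]

theorem rsgf_infeasible_strict_decrease_general {C : E → ℝ} {L δ γ : ℝ} {θ θ' : E}
    (hdiff : ∀ z ∈ segment ℝ θ θ', DifferentiableAt ℝ C z)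
    (hlip : ∀ z ∈ segment ℝ θ θ', ‖gradient C z - gradient C θ‖ ≤ L * ‖z - θ‖)
    (hδ : 0 < δ) (hδL : δ * L ≤ 1)
    (hcon : γ * δ * C θ + ⟪gradient C θ, θ' - θ⟫ + (1 / (2 * δ)) * ‖θ' - θ‖ ^ 2 ≤ 0) :
    C θ' ≤ (1 - γ * δ) * C θ := by
  have hL : L / 2 ≤ 1 / (2 * δ) := by
    rw [div_le_div_iff₀ two_pos (by positivity)]
    linarith
  calc C θ' ≤ C θ + ⟪gradient C θ, θ' - θ⟫ + L / 2 * ‖θ' - θ‖ ^ 2 :=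
        image_le_add_inner_gradient_add_of_norm_gradient_sub_le_segment hdiff hlip
    _ ≤ C θ + ⟪gradient C θ, θ' - θ⟫ + 1 / (2 * δ) * ‖θ' - θ‖ ^ 2 := by gcongr
    _ ≤ (1 - γ * δ) * C θ := by linarith

end Gradient

/-- Strict decrease of an infeasible constraint along a robust safe gradient flow
step: if `C` is differentiable with `Lᵢ`-Lipschitz gradient, `γδ < 1`, `δ ≤ 1/Lᵢ`,
the pair `(θ, θ')` satisfies the RSGF constraint, and `C(θ) > 0`, then
`C(θ') < C(θ)`. -/
theorem rsgf_infeasible_strict_decrease (d : ℕ)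
    (C : EuclideanSpace ℝ (Fin d) → ℝ) (Li : ℝ) (hLi : 0 < Li)
    (hdiff : Differentiable ℝ C)
    (hlip : ∀ x y : EuclideanSpace ℝ (Fin d),
      ‖gradient C x - gradient C y‖ ≤ Li * ‖x - y‖)
    (δ γ : ℝ) (hδ : 0 < δ) (hγ : 0 < γ) (hγδ : γ * δ < 1) (hδL : δ ≤ 1 / Li)
    (θ θ' : EuclideanSpace ℝ (Fin d))
    (hcon : γ * δ * C θ + ⟪gradient C θ, θ' - θ⟫ + (1 / (2 * δ)) * ‖θ' - θ‖ ^ 2 ≤ 0)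
    (hpos : 0 < C θ) :
    C θ' < C θ :=
  (rsgf_infeasible_strict_decrease_general (fun z _ ↦ hdiff z) (fun z _ ↦ hlip z θ) hδ
    ((le_div_iff₀ hLi).1 hδL) hcon).trans_lt
    (mul_lt_of_lt_one_left hpos (sub_lt_self 1 (mul_pos hγ hδ)))
end

section
/- Let C : ℝ^d → ℝ be differentiable with L_i-Lipschitz gradient (L_i > 0), let δ > 0 and γ > 0 with γδ < 1 and δ ≤ 1/L_i, and let (θ_k)_{k∈ℕ} be a sequence in ℝ^d such that for every k, γδ·C(θ_k) + ⟨∇C(θ_k), θ_{k+1} − θ_k⟩ + (1/(2δ))·‖θ_{k+1} − θ_k‖² ≤ 0. Then C(θ_k) ≤ (1 − γδ)^k · C(θ_0) for all k ∈ ℕ; in particular, for every ε' > 0 there exists N ∈ ℕ such that C(θ_k) ≤ ε' for all k ≥ N, i.e., the sequence (θ_k) converges to the feasible set {θ : C(θ) ≤ 0}. -/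
/-!
A one-sided Lipschitz bound on the derivative makes `C` lie below its quadratic models:
`C y ≤ C x + C' x (y - x) + L / 2 * ‖y - x‖ ^ 2`. When `L ≤ 1 / δ`, the quadratic term is absorbed
by the penalty in the step constraint, which then reads `C (θ (k + 1)) ≤ (1 - γ * δ) * C (θ k)`.
-/

open scoped RealInnerProductSpace
open Set Filter Topology

theorem image_le_quadratic_of_deriv_le {φ φ' : ℝ → ℝ} {a b m c : ℝ} (hab : a ≤ b)
    (hcont : ContinuousOn φ (Icc a b)) (hderiv : ∀ t ∈ Ioo a b, HasDerivAt φ (φ' t) t)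
    (hbound : ∀ t ∈ Ioo a b, φ' t ≤ m + c * (t - a)) :
    φ b ≤ φ a + m * (b - a) + c / 2 * (b - a) ^ 2 := by
  have hquad (t : ℝ) :
      HasDerivAt (fun u ↦ m * (u - a) + c / 2 * (u - a) ^ 2) (m + c * (t - a)) t := by
    have hsub : HasDerivAt (fun u ↦ u - a) 1 t := (hasDerivAt_id t).sub_const a
    refine ((hsub.const_mul m).add ((hsub.pow 2).const_mul (c / 2))).congr_deriv ?_
    simp only [Nat.cast_ofNat, Nat.add_one_sub_one, pow_one, mul_one]
    ring
  have hanti : AntitoneOn (fun u ↦ φ u - (m * (u - a) + c / 2 * (u - a) ^ 2)) (Icc a b) := by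
    refine antitoneOn_of_hasDerivWithinAt_nonpos (f' := fun t ↦ φ' t - (m + c * (t - a)))
      (convex_Icc a b) (hcont.sub (by fun_prop)) ?_ ?_ <;>
      rw [interior_Icc]
    · exact fun t ht ↦ ((hderiv t ht).sub (hquad t)).hasDerivWithinAt
    · exact fun t ht ↦ sub_nonpos.2 (hbound t ht)
  have hends := hanti (left_mem_Icc.2 hab) (right_mem_Icc.2 hab) hab
  simp only [sub_self, mul_zero, zero_pow two_ne_zero, add_zero, sub_zero] at hends
  linarith

section OneSidedLipschitz

variable {E : Type*} [NormedAddCommGroup E] [NormedSpace ℝ E]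
  {s : Set E} {f : E → ℝ} {f' : E → StrongDual ℝ E} {L : ℝ} {x y : E}

theorem apply_lineMap_le_of_one_sided_lipschitz (hs : StarConvex ℝ x s)
    (hL : ∀ z ∈ s, (f' z - f' x) (z - x) ≤ L * ‖z - x‖ ^ 2)
    (hy : y ∈ s) {t : ℝ} (ht : t ∈ Ioc 0 1) :
    f' (AffineMap.lineMap x y t) (y - x) ≤ f' x (y - x) + L * ‖y - x‖ ^ 2 * t := by
  have hstep : AffineMap.lineMap x y t - x = t • (y - x) := by
    simp [AffineMap.lineMap_apply_module']
  have hscaled := hL _ (hs.segment_subset hy <|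
    lineMap_mem_segment ℝ x y (Ioc_subset_Icc_self ht))
  rw [hstep, map_smul, smul_eq_mul, norm_smul, Real.norm_of_nonneg ht.1.le, sub_apply] at hscaled
  refine le_of_mul_le_mul_left ?_ ht.1
  linarith

theorem le_add_apply_add_sq_of_one_sided_lipschitz (hs : StarConvex ℝ x s)
    (hf : ∀ z ∈ s, HasFDerivWithinAt f (f' z) s z)
    (hL : ∀ z ∈ s, (f' z - f' x) (z - x) ≤ L * ‖z - x‖ ^ 2) (hy : y ∈ s) :
    f y ≤ f x + f' x (y - x) + L / 2 * ‖y - x‖ ^ 2 := by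
  have hmaps : MapsTo (AffineMap.lineMap x y) (Icc (0 : ℝ) 1) s := fun _ ht ↦
    hs.segment_subset hy (lineMap_mem_segment ℝ x y ht)
  have hderiv : ∀ t ∈ Icc (0 : ℝ) 1, HasDerivWithinAt (f ∘ AffineMap.lineMap x y)
      (f' (AffineMap.lineMap x y t) (y - x)) (Icc 0 1) t := fun t ht ↦
    (hf _ (hmaps ht)).comp_hasDerivWithinAt t AffineMap.hasDerivWithinAt_lineMap hmaps
  have hmodel := image_le_quadratic_of_deriv_le (m := f' x (y - x)) (c := L * ‖y - x‖ ^ 2)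
    zero_le_one (fun t ht ↦ (hderiv t ht).continuousWithinAt)
    (fun t ht ↦ (hderiv t (Ioo_subset_Icc_self ht)).hasDerivAt (Icc_mem_nhds ht.1 ht.2))
    (fun t ht ↦ by
      simpa only [sub_zero] using
        apply_lineMap_le_of_one_sided_lipschitz hs hL hy (Ioo_subset_Ioc_self ht))
  simp only [Function.comp_apply, AffineMap.lineMap_apply_one, AffineMap.lineMap_apply_zero]
    at hmodel
  linarith

theorem le_one_sub_mul_of_rsgf_constraint (hs : StarConvex ℝ x s)
    (hf : ∀ z ∈ s, HasFDerivWithinAt f (f' z) s z)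
    (hL : ∀ z ∈ s, (f' z - f' x) (z - x) ≤ L * ‖z - x‖ ^ 2)
    (hy : y ∈ s) {δ c : ℝ} (hδ : 0 < δ) (hLδ : L * δ ≤ 1)
    (hcon : c * f x + f' x (y - x) + 1 / (2 * δ) * ‖y - x‖ ^ 2 ≤ 0) :
    f y ≤ (1 - c) * f x := by
  have hcoeff : L / 2 ≤ 1 / (2 * δ) := by
    rw [le_div_iff₀ (by positivity)]
    linarith
  calc f y ≤ f x + f' x (y - x) + L / 2 * ‖y - x‖ ^ 2 :=
        le_add_apply_add_sq_of_one_sided_lipschitz hs hf hL hy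
    _ ≤ f x + f' x (y - x) + 1 / (2 * δ) * ‖y - x‖ ^ 2 := by gcongr
    _ ≤ (1 - c) * f x := by linarith

end OneSidedLipschitz

theorem fderiv_sub_apply_le_of_gradient_lipschitz {F : Type*} [NormedAddCommGroup F]
    [InnerProductSpace ℝ F] [CompleteSpace F] {f : F → ℝ} {L : ℝ} {x y : F}
    (hlip : ‖gradient f y - gradient f x‖ ≤ L * ‖y - x‖) :
    (fderiv ℝ f y - fderiv ℝ f x) (y - x) ≤ L * ‖y - x‖ ^ 2 := by
  rw [sub_apply, ← inner_gradient_left, ← inner_gradient_left, ← inner_sub_left]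
  calc ⟪gradient f y - gradient f x, y - x⟫
      ≤ ‖gradient f y - gradient f x‖ * ‖y - x‖ := real_inner_le_norm _ _
    _ ≤ L * ‖y - x‖ * ‖y - x‖ := by gcongr
    _ = L * ‖y - x‖ ^ 2 := by ring

theorem eventually_le_of_le_pow_mul {u : ℕ → ℝ} {q a ε : ℝ} (hq : |q| < 1)
    (hu : ∀ᶠ n in atTop, u n ≤ q ^ n * a) (hε : 0 < ε) : ∀ᶠ n in atTop, u n ≤ ε := by
  have hlim : Tendsto (fun n ↦ q ^ n * a) atTop (𝓝 0) := by
    simpa only [zero_mul] using (tendsto_pow_atTop_nhds_zero_of_abs_lt_one hq).mul_const a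
  filter_upwards [hu, hlim.eventually_le_const hε] with n hn hn' using hn.trans hn'

theorem rsgf_geometric_decay_to_feasible_general {E : Type*} [NormedAddCommGroup E]
    [NormedSpace ℝ E] {s : Set E} (hs : Convex ℝ s) {C : E → ℝ} {C' : E → StrongDual ℝ E}
    (hC : ∀ x ∈ s, HasFDerivWithinAt C (C' x) s x) {L : ℝ}
    (hL : ∀ x ∈ s, ∀ y ∈ s, (C' y - C' x) (y - x) ≤ L * ‖y - x‖ ^ 2)
    {δ γ : ℝ} (hδ : 0 < δ) (hγ : 0 < γ) (hγδ : γ * δ ≤ 1) (hLδ : L * δ ≤ 1)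
    {θ : ℕ → E} (hθ : ∀ k, θ k ∈ s)
    (hcon : ∀ k, γ * δ * C (θ k) + C' (θ k) (θ (k + 1) - θ k) +
      1 / (2 * δ) * ‖θ (k + 1) - θ k‖ ^ 2 ≤ 0) :
    (∀ k, C (θ k) ≤ (1 - γ * δ) ^ k * C (θ 0)) ∧
      ∀ ε' > (0 : ℝ), ∃ N : ℕ, ∀ k ≥ N, C (θ k) ≤ ε' := by
  have hrate_nonneg : 0 ≤ 1 - γ * δ := sub_nonneg.2 hγδ
  have hrate_lt_one : |1 - γ * δ| < 1 := by
    rw [abs_of_nonneg hrate_nonneg]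
    linarith [mul_pos hγ hδ]
  have hdecay (k : ℕ) : C (θ k) ≤ (1 - γ * δ) ^ k * C (θ 0) :=
    le_geom (u := C ∘ θ) hrate_nonneg k fun j _ ↦
      le_one_sub_mul_of_rsgf_constraint (hs.starConvex (hθ j)) hC (hL _ (hθ j)) (hθ (j + 1))
        hδ hLδ (hcon j)
  exact ⟨hdecay, fun ε' hε' ↦ eventually_atTop.1 <|
    eventually_le_of_le_pow_mul hrate_lt_one (.of_forall hdecay) hε'⟩

/-- Geometric decay of constraint values along the robust safe gradient flow and
convergence to the feasible set: if `C` is differentiable with `Lᵢ`-Lipschitz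
gradient, `γδ < 1`, `δ ≤ 1/Lᵢ`, and every step of the sequence satisfies the RSGF
constraint, then `C(θ k) ≤ (1 - γδ)^k C(θ 0)` for all `k`, and for every `ε' > 0`
there is `N` such that `C(θ k) ≤ ε'` for all `k ≥ N`. -/
theorem rsgf_geometric_decay_to_feasible (d : ℕ)
    (C : EuclideanSpace ℝ (Fin d) → ℝ) (Li : ℝ) (hLi : 0 < Li)
    (hdiff : Differentiable ℝ C)
    (hlip : ∀ x y : EuclideanSpace ℝ (Fin d),
      ‖gradient C x - gradient C y‖ ≤ Li * ‖x - y‖)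
    (δ γ : ℝ) (hδ : 0 < δ) (hγ : 0 < γ) (hγδ : γ * δ < 1) (hδL : δ ≤ 1 / Li)
    (θ : ℕ → EuclideanSpace ℝ (Fin d))
    (hcon : ∀ k : ℕ,
      γ * δ * C (θ k) + ⟪gradient C (θ k), θ (k + 1) - θ k⟫ +
        (1 / (2 * δ)) * ‖θ (k + 1) - θ k‖ ^ 2 ≤ 0) :
    (∀ k : ℕ, C (θ k) ≤ (1 - γ * δ) ^ k * C (θ 0)) ∧
      ∀ ε' > (0 : ℝ), ∃ N : ℕ, ∀ k ≥ N, C (θ k) ≤ ε' := by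
  simp only [inner_gradient_left] at hcon
  exact rsgf_geometric_decay_to_feasible_general convex_univ
    (fun x _ ↦ (hdiff x).hasFDerivAt.hasFDerivWithinAt)
    (fun x _ y _ ↦ fderiv_sub_apply_le_of_gradient_lipschitz (hlip y x))
    hδ hγ hγδ.le ((le_div_iff₀' hLi).1 hδL) (fun _ ↦ mem_univ _) hcon
end
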